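/- Let (L,[-,-,-]) be a ternary Leibniz algebra over a field K, (M,l₁,l₂,l₃) a bimodule over L, and ω : L × L × L → M a trilinear 2-cocycle, i.e. l₁(ω(x,y,z),t,u) + ω([x,y,z],t,u) = l₃(x,y,ω(z,t,u)) + l₂(x,ω(y,t,u),z) + l₁(ω(x,t,u),y,z) + ω(x,y,[z,t,u]) + ω(x,[y,t,u],z) + ω([x,t,u],y,z) for all x,y,z,t,u ∈ L. Then L ⊕ M is a ternary Leibniz algebra with the bracket [x+m₁, y+m₂, z+m₃]_ω := [x,y,z] + l₁(m₁,y,z) + l₂(x,m₂,z) + l₃(x,y,m₃) + ω(x,y,z). Moreover the brackets [-,-,-]_ω and [-,-,-]_0 (the bracket obtained with the zero cocycle in place of ω) are compatible ternary Leibniz brackets on L ⊕ M. -/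

import Mathlib

variable {K : Type*} [Field K] {L : Type*} [AddCommGroup L] [Module K L]
variable {M : Type*} [AddCommGroup M] [Module K M]

/-- The (right) ternary Leibniz identity for a ternary bracket. -/
def TernaryLeibnizId {A : Type*} [AddCommGroup A] (b : A → A → A → A) : Prop :=
  ∀ x y z t u : A,
    b (b x y z) t u = b x y (b z t u) + b x (b y t u) z + b (b x t u) y z

/-- Compatibility of two ternary brackets. -/
def TernaryCompat {A : Type*} [AddCommGroup A] (b₁ b₂ : A → A → A → A) : Prop :=
  ∀ x y z t u : A,
    b₂ (b₁ x y z) t u + b₁ (b₂ x y z) t u =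
      b₂ x y (b₁ z t u) + b₁ x y (b₂ z t u) + b₂ x (b₁ y t u) z + b₁ x (b₂ y t u) z +
        b₂ (b₁ x t u) y z + b₁ (b₂ x t u) y z

/-- A bimodule `(M, l₁, l₂, l₃)` over a ternary Leibniz algebra `(L, t)`. -/
def IsTernaryBimodule (t : L → L → L → L)
    (l₁ : M → L → L → M) (l₂ : L → M → L → M) (l₃ : L → L → M → M) : Prop :=
  (∀ (x y z w : L) (m : M),
    l₁ (l₁ m x y) z w = l₁ m x (t y z w) + l₁ m (t x z w) y + l₁ (l₁ m z w) x y) ∧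
  (∀ (x y z w : L) (m : M),
    l₁ (l₂ x m y) z w = l₂ x m (t y z w) + l₂ x (l₁ m z w) y + l₂ (t x z w) m y) ∧
  (∀ (x y z w : L) (m : M),
    l₁ (l₃ x y m) z w = l₃ x y (l₁ m z w) + l₃ x (t y z w) m + l₃ (t x z w) y m) ∧
  (∀ (x y z w : L) (m : M),
    l₂ (t x y z) m w = l₃ x y (l₂ z m w) + l₂ x (l₂ y m w) z + l₁ (l₂ x m w) y z) ∧
  (∀ (x y z w : L) (m : M),
    l₃ (t x y z) w m = l₃ x y (l₃ z w m) + l₂ x (l₃ y w m) z + l₁ (l₃ x w m) y z)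

/-!
Write `[-,-,-]_ω = [-,-,-]_0 + ω̃`, where `[-,-,-]_0` is the semidirect bracket on `L ⊕ M` and
`ω̃(x+m₁, y+m₂, z+m₃) = ω(x,y,z)`. The Leibniz identity is quadratic in the bracket and
compatibility is its polarization, so the sum of two compatible trilinear Leibniz brackets is again
Leibniz and is compatible with each summand. Now `[-,-,-]_0` is Leibniz by the bimodule axioms,
`ω̃` is Leibniz because it takes values in `M` and vanishes as soon as one argument lies in `M`, and
the two are compatible precisely when `ω` is a 2-cocycle.
-/

section Polarization

variable {A : Type*} [AddCommGroup A]

theorem TernaryLeibnizId.compat_self {b : A → A → A → A} (hb : TernaryLeibnizId b) :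
    TernaryCompat b b := by
  intro x y z w u
  linear_combination (norm := abel) hb x y z w u + hb x y z w u

theorem TernaryCompat.symm {b₁ b₂ : A → A → A → A} (h : TernaryCompat b₁ b₂) :
    TernaryCompat b₂ b₁ := by
  intro x y z w u
  linear_combination (norm := abel) h x y z w u

variable {R : Type*} [CommSemiring R] [Module R A] {b₁ b₂ c : A →ₗ[R] A →ₗ[R] A →ₗ[R] A}

theorem TernaryCompat.add_left (h₁ : TernaryCompat (b₁ · · ·) (c · · ·))
    (h₂ : TernaryCompat (b₂ · · ·) (c · · ·)) :
    TernaryCompat ((b₁ + b₂) · · ·) (c · · ·) := by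
  intro x y z w u
  simp only [LinearMap.add_apply, map_add]
  linear_combination (norm := abel) h₁ x y z w u + h₂ x y z w u

theorem TernaryLeibnizId.add (h₁ : TernaryLeibnizId (b₁ · · ·))
    (h₂ : TernaryLeibnizId (b₂ · · ·)) (h : TernaryCompat (b₁ · · ·) (b₂ · · ·)) :
    TernaryLeibnizId ((b₁ + b₂) · · ·) := by
  intro x y z w u
  simp only [LinearMap.add_apply, map_add]
  linear_combination (norm := abel) h₁ x y z w u + h₂ x y z w u + h x y z w u

end Polarization

section Extension

variable {R : Type*} [CommSemiring R] [Module R L] [Module R M]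
variable {t : L →ₗ[R] L →ₗ[R] L →ₗ[R] L} {l₁ : M →ₗ[R] L →ₗ[R] L →ₗ[R] M}
  {l₂ : L →ₗ[R] M →ₗ[R] L →ₗ[R] M} {l₃ : L →ₗ[R] L →ₗ[R] M →ₗ[R] M}
  {ω : L →ₗ[R] L →ₗ[R] L →ₗ[R] M}

/-- The 2-cocycle condition for a trilinear map `ω` on `(L, t)` with coefficients in
`(M, l₁, l₂, l₃)`. -/
def IsTernaryCocycle (t : L →ₗ[R] L →ₗ[R] L →ₗ[R] L) (l₁ : M →ₗ[R] L →ₗ[R] L →ₗ[R] M)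
    (l₂ : L →ₗ[R] M →ₗ[R] L →ₗ[R] M) (l₃ : L →ₗ[R] L →ₗ[R] M →ₗ[R] M)
    (ω : L →ₗ[R] L →ₗ[R] L →ₗ[R] M) : Prop :=
  ∀ x y z w u : L,
    l₁ (ω x y z) w u + ω (t x y z) w u =
      l₃ x y (ω z w u) + l₂ x (ω y w u) z + l₁ (ω x w u) y z +
        ω x y (t z w u) + ω x (t y w u) z + ω (t x w u) y z

/-- The semidirect product bracket `[-,-,-]_0` on `L ⊕ M`, modelled on `L × M` as a trilinear map
so that it can be added to other brackets. -/
def semidirectBracket (t : L →ₗ[R] L →ₗ[R] L →ₗ[R] L) (l₁ : M →ₗ[R] L →ₗ[R] L →ₗ[R] M)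
    (l₂ : L →ₗ[R] M →ₗ[R] L →ₗ[R] M) (l₃ : L →ₗ[R] L →ₗ[R] M →ₗ[R] M) :
    L × M →ₗ[R] L × M →ₗ[R] L × M →ₗ[R] L × M :=
  LinearMap.mk₂ R
    (fun p q => (t p.1 q.1 ∘ₗ LinearMap.fst R L M).prod
      ((l₁ p.2 q.1 + l₂ p.1 q.2) ∘ₗ LinearMap.fst R L M + l₃ p.1 q.1 ∘ₗ LinearMap.snd R L M))
    (fun _ _ _ => by ext <;> simp [add_add_add_comm])
    (fun _ _ _ => by ext <;> simp)
    (fun _ _ _ => by ext <;> simp [add_add_add_comm])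
    (fun _ _ _ => by ext <;> simp)

/-- The bracket `ω̃` on `L ⊕ M` that applies `ω` to the `L`-components and lands in `M`; it is the
difference between `[-,-,-]_ω` and `[-,-,-]_0`. -/
def cocycleBracket (ω : L →ₗ[R] L →ₗ[R] L →ₗ[R] M) :
    L × M →ₗ[R] L × M →ₗ[R] L × M →ₗ[R] L × M :=
  LinearMap.mk₂ R (fun p q => LinearMap.inr R L M ∘ₗ ω p.1 q.1 ∘ₗ LinearMap.fst R L M)
    (fun _ _ _ => by ext <;> simp)
    (fun _ _ _ => by ext <;> simp)
    (fun _ _ _ => by ext <;> simp)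
    (fun _ _ _ => by ext <;> simp)

theorem semidirectBracket_apply (p q r : L × M) :
    semidirectBracket t l₁ l₂ l₃ p q r =
      (t p.1 q.1 r.1, l₁ p.2 q.1 r.1 + l₂ p.1 q.2 r.1 + l₃ p.1 q.1 r.2) :=
  rfl

theorem cocycleBracket_apply (p q r : L × M) :
    cocycleBracket ω p q r = (0, ω p.1 q.1 r.1) :=
  rfl

theorem semidirectBracket_add_cocycleBracket_apply (p q r : L × M) :
    (semidirectBracket t l₁ l₂ l₃ + cocycleBracket ω) p q r =
      (t p.1 q.1 r.1,
        l₁ p.2 q.1 r.1 + l₂ p.1 q.2 r.1 + l₃ p.1 q.1 r.2 + ω p.1 q.1 r.1) := by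
  simp only [LinearMap.add_apply, semidirectBracket_apply, cocycleBracket_apply, Prod.mk_add_mk,
    add_zero]

theorem ternaryLeibnizId_semidirectBracket (ht : TernaryLeibnizId (t · · ·))
    (hmod : IsTernaryBimodule (t · · ·) (l₁ · · ·) (l₂ · · ·) (l₃ · · ·)) :
    TernaryLeibnizId (semidirectBracket t l₁ l₂ l₃ · · ·) := by
  obtain ⟨hl₁, hl₁₂, hl₁₃, hl₂, hl₃⟩ := hmod
  rintro ⟨x, a⟩ ⟨y, b⟩ ⟨z, c⟩ ⟨w, d⟩ ⟨u, e⟩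
  refine Prod.ext (ht x y z w u) ?_
  simp only [semidirectBracket_apply, map_add, LinearMap.add_apply, Prod.snd_add]
  -- Both sides are additive in `(a, b, c, d, e)`, and each bimodule axiom handles one variable.
  linear_combination (norm := abel)
    hl₁ y z w u a + hl₁₂ x z w u b + hl₁₃ x y w u c + hl₂ x y z u d + hl₃ x y z w e

theorem ternaryLeibnizId_cocycleBracket : TernaryLeibnizId (cocycleBracket ω · · ·) := by
  intro p q r s v
  simp only [cocycleBracket_apply, map_zero, LinearMap.zero_apply, Prod.mk_zero_zero, add_zero]

theorem ternaryCompat_semidirectBracket_cocycleBracket_iff :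
    TernaryCompat (semidirectBracket t l₁ l₂ l₃ · · ·) (cocycleBracket ω · · ·) ↔
      IsTernaryCocycle t l₁ l₂ l₃ ω := by
  simp only [TernaryCompat, IsTernaryCocycle, Prod.forall, semidirectBracket_apply,
    cocycleBracket_apply, map_zero, LinearMap.zero_apply, Prod.mk_add_mk, Prod.mk.injEq, add_zero,
    zero_add, true_and]
  constructor
  · intro h x y z w u
    linear_combination (norm := abel) h x 0 y 0 z 0 w 0 u 0
  · intro h x _ y _ z _ w _ u _
    linear_combination (norm := abel) h x y z w u

theorem cocycle_extension_ternaryLeibniz_general (ht : TernaryLeibnizId (t · · ·))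
    (hmod : IsTernaryBimodule (t · · ·) (l₁ · · ·) (l₂ · · ·) (l₃ · · ·))
    (hω : IsTernaryCocycle t l₁ l₂ l₃ ω) :
    TernaryLeibnizId (fun p q r : L × M =>
        (t p.1 q.1 r.1,
          l₁ p.2 q.1 r.1 + l₂ p.1 q.2 r.1 + l₃ p.1 q.1 r.2 + ω p.1 q.1 r.1)) ∧
      TernaryLeibnizId (fun p q r : L × M =>
        (t p.1 q.1 r.1, l₁ p.2 q.1 r.1 + l₂ p.1 q.2 r.1 + l₃ p.1 q.1 r.2)) ∧
      TernaryCompat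
        (fun p q r : L × M =>
          (t p.1 q.1 r.1,
            l₁ p.2 q.1 r.1 + l₂ p.1 q.2 r.1 + l₃ p.1 q.1 r.2 + ω p.1 q.1 r.1))
        (fun p q r : L × M =>
          (t p.1 q.1 r.1, l₁ p.2 q.1 r.1 + l₂ p.1 q.2 r.1 + l₃ p.1 q.1 r.2)) := by
  have hsemidirect := ternaryLeibnizId_semidirectBracket ht hmod
  have hcompat := ternaryCompat_semidirectBracket_cocycleBracket_iff.mpr hω
  simp only [← semidirectBracket_add_cocycleBracket_apply, ← semidirectBracket_apply]
  exact ⟨hsemidirect.add ternaryLeibnizId_cocycleBracket hcompat, hsemidirect,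
    hsemidirect.compat_self.add_left hcompat.symm⟩

end Extension

/-- Given a bimodule `(M, l₁, l₂, l₃)` over a ternary Leibniz algebra `(L, [-,-,-])` and a
trilinear `2`-cocycle `ω : L × L × L → M`, the direct sum `L ⊕ M` is a ternary Leibniz
algebra with the bracket
`[x+m₁, y+m₂, z+m₃]_ω := [x,y,z] + l₁(m₁,y,z) + l₂(x,m₂,z) + l₃(x,y,m₃) + ω(x,y,z)`;
moreover `[-,-,-]_ω` and `[-,-,-]_0` are compatible ternary Leibniz brackets on `L ⊕ M`. -/
theorem cocycle_extension_ternaryLeibniz (t : L →ₗ[K] L →ₗ[K] L →ₗ[K] L)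
    (ht : TernaryLeibnizId fun x y z => t x y z)
    (l₁ : M →ₗ[K] L →ₗ[K] L →ₗ[K] M) (l₂ : L →ₗ[K] M →ₗ[K] L →ₗ[K] M)
    (l₃ : L →ₗ[K] L →ₗ[K] M →ₗ[K] M)
    (hmod : IsTernaryBimodule (fun x y z => t x y z)
      (fun m x y => l₁ m x y) (fun x m y => l₂ x m y) (fun x y m => l₃ x y m))
    (ω : L →ₗ[K] L →ₗ[K] L →ₗ[K] M)
    (hω : ∀ x y z w u : L,
      l₁ (ω x y z) w u + ω (t x y z) w u =
        l₃ x y (ω z w u) + l₂ x (ω y w u) z + l₁ (ω x w u) y z +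
          ω x y (t z w u) + ω x (t y w u) z + ω (t x w u) y z) :
    TernaryLeibnizId (fun p q r : L × M =>
        (t p.1 q.1 r.1,
          l₁ p.2 q.1 r.1 + l₂ p.1 q.2 r.1 + l₃ p.1 q.1 r.2 + ω p.1 q.1 r.1)) ∧
      TernaryLeibnizId (fun p q r : L × M =>
        (t p.1 q.1 r.1, l₁ p.2 q.1 r.1 + l₂ p.1 q.2 r.1 + l₃ p.1 q.1 r.2)) ∧
      TernaryCompat
        (fun p q r : L × M =>
          (t p.1 q.1 r.1,
            l₁ p.2 q.1 r.1 + l₂ p.1 q.2 r.1 + l₃ p.1 q.1 r.2 + ω p.1 q.1 r.1))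
        (fun p q r : L × M =>
          (t p.1 q.1 r.1, l₁ p.2 q.1 r.1 + l₂ p.1 q.2 r.1 + l₃ p.1 q.1 r.2)) :=
  cocycle_extension_ternaryLeibniz_general ht hmod hω
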